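/- (Theorem 5) For (p+1)-variate data with univariate nonresponse given by real numbers X_i^(1),…,X_i^(p) and R_i ∈ {0,1}, i = 1,…,n, with 0 < R̄_n < 1 (where R̄_n = n⁻¹∑R_i) and with the maximum-likelihood sample covariance matrix S̃ of the X-columns (entries S̃_{uv} = n⁻¹∑_i X_i^(u)X_i^(v) − X̄^(u)X̄^(v)) invertible, the novel statistic equals Little's statistic: A_n = d². Here A_n = n·T̃·Σ̃^(−1)·T̃ᵀ, where T̃ = (T̃^(1),…,T̃^(p)) with T̃^(u) = X̄^(u)·R̄_n − n⁻¹∑_i X_i^(u)R_i and Σ̃ = R̄_n(1−R̄_n)·S̃; and d² = n·R̄_n·L·S̃^(−1)·Lᵀ + n·(1−R̄_n)·L₁'·S̃^(−1)·L₁'ᵀ, where L is the vector with components L^(u) = (∑_i X_i^(u)R_i)/(∑_i R_i) − X̄^(u) (mean of X^(u) over observed rows minus overall mean) and L₁' is the vector with components (∑_i X_i^(u)(1−R_i))/(∑_i (1−R_i)) − X̄^(u) (mean of X^(u) over rows with missing Y minus overall mean). -/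

import Mathlib

open Finset

/-!
Write `c u` for the sample covariance of `X⁽ᵘ⁾` with `R`, and `r` for the mean of `R`.
The mean of `X` weighted by `w` deviates from its plain mean by `cov(X, w) / mean w`. Since
`cov(X, 1 - R) = -cov(X, R)`, the respondents' deviation is `c / r` and the nonrespondents' one
is `-c / (1 - r)`; moreover `T̃ = -c`. So both statistics are multiples of the single quadratic form
`c S̃⁻¹ cᵀ`, and they agree because `r * r⁻² + (1 - r) * (1 - r)⁻² = (r * (1 - r))⁻¹`.
-/

open scoped BigOperators Matrix

section Mahalanobis

variable {κ K : Type*} [Fintype κ] [DecidableEq κ]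

/-- The squared Mahalanobis norm `x S⁻¹ xᵀ` of a vector `x` with respect to a covariance
matrix `S`. -/
noncomputable def mahalanobisSq [CommRing K] (S : Matrix κ κ K) (x : κ → K) : K :=
  x ⬝ᵥ S⁻¹ *ᵥ x

lemma mahalanobisSq_eq_sum [CommRing K] (S : Matrix κ κ K) (x : κ → K) :
    mahalanobisSq S x = ∑ u, ∑ v, x u * S⁻¹ u v * x v := by
  simp only [mahalanobisSq, dotProduct, Matrix.mulVec, mul_sum, mul_assoc]

lemma mahalanobisSq_smul_right [CommRing K] (S : Matrix κ κ K) (a : K) (x : κ → K) :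
    mahalanobisSq S (a • x) = a ^ 2 * mahalanobisSq S x := by
  simp only [mahalanobisSq, Matrix.mulVec_smul, smul_dotProduct, dotProduct_smul, smul_eq_mul]
  ring

lemma mahalanobisSq_neg [CommRing K] (S : Matrix κ κ K) (x : κ → K) :
    mahalanobisSq S (-x) = mahalanobisSq S x := by
  simp only [mahalanobisSq, Matrix.mulVec_neg, neg_dotProduct_neg]

lemma mahalanobisSq_smul_left [Field K] {S : Matrix κ κ K} (hS : IsUnit S) {a : K} (ha : a ≠ 0)
    (x : κ → K) : mahalanobisSq (a • S) x = a⁻¹ * mahalanobisSq S x := by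
  have h_inv : (a • S)⁻¹ = a⁻¹ • S⁻¹ :=
    Matrix.inv_smul' S (Units.mk0 a ha) ((Matrix.isUnit_iff_isUnit_det S).mp hS)
  rw [mahalanobisSq, h_inv, Matrix.smul_mulVec, dotProduct_smul, smul_eq_mul, mahalanobisSq]

end Mahalanobis

section SampleCovariance

variable {ι κ K : Type*} [Fintype ι] [Field K]

lemma centerMass_eq_sum_div_sum (w x : ι → K) :
    univ.centerMass w x = (∑ i, x i * w i) / ∑ i, w i := by
  simp only [centerMass, smul_eq_mul, mul_comm (w _), inv_mul_eq_div]

variable [CharZero K]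

lemma inv_mul_sum_fin_eq_expect {n : ℕ} (x : Fin n → K) :
    (n : K)⁻¹ * ∑ i, x i = 𝔼 i, x i := by
  rw [Fintype.expect_eq_sum_div_card, Fintype.card_fin, inv_mul_eq_div]

lemma expect_one_sub [Nonempty ι] (w : ι → K) : 𝔼 i, (1 - w) i = 1 - 𝔼 i, w i := by
  simp only [Pi.sub_apply, Pi.one_apply, expect_sub_distrib, Fintype.expect_one]

lemma centerMass_eq_expect_div_expect (w x : ι → K) :
    univ.centerMass w x = (𝔼 i, x i * w i) / 𝔼 i, w i := by
  cases isEmpty_or_nonempty ι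
  · simp [centerMass_empty]
  · have h_card : (Fintype.card ι : K) ≠ 0 := Nat.cast_ne_zero.mpr Fintype.card_ne_zero
    simp only [centerMass_eq_sum_div_sum, Fintype.expect_eq_sum_div_card,
      div_div_div_cancel_right₀ h_card]

/-- The maximum-likelihood (that is, normalised by the sample size) sample covariance of two
columns. -/
def sampleCov (x y : ι → K) : K :=
  𝔼 i, x i * y i - (𝔼 i, x i) * 𝔼 i, y i

lemma sampleCov_one_sub_right (x w : ι → K) : sampleCov x (1 - w) = -sampleCov x w := by
  cases isEmpty_or_nonempty ι
  · simp [sampleCov]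
  · simp only [sampleCov, Pi.sub_apply, Pi.one_apply, mul_sub, mul_one, expect_sub_distrib,
      Fintype.expect_one]
    ring

/-- The maximum-likelihood sample covariance matrix `S̃` of the columns of the data `X`. -/
def sampleCovMatrix (X : κ → ι → K) : Matrix κ κ K :=
  Matrix.of fun u v => sampleCov (X u) (X v)

/-- The vector of deviations of the `w`-weighted means of the columns of `X` from their plain
means. The weights `w = R` and `w = 1 - R` give the vectors `L` and `L₁'` of Little's statistic. -/
def meanShift (X : κ → ι → K) (w : ι → K) : κ → K :=
  fun u => univ.centerMass w (X u) - 𝔼 i, X u i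

lemma meanShift_apply (X : κ → ι → K) (w : ι → K) (u : κ) :
    meanShift X w u = (∑ i, X u i * w i) / (∑ i, w i) - 𝔼 i, X u i := by
  rw [meanShift, centerMass_eq_sum_div_sum]

lemma meanShift_eq_smul_sampleCov (X : κ → ι → K) {w : ι → K} (hw : 𝔼 i, w i ≠ 0) :
    meanShift X w = (𝔼 i, w i)⁻¹ • fun u => sampleCov (X u) w := by
  ext u
  simp only [meanShift, centerMass_eq_expect_div_expect, sampleCov, Pi.smul_apply, smul_eq_mul]
  field_simp

lemma meanShift_one_sub [Nonempty ι] (X : κ → ι → K) {w : ι → K} (hw : 𝔼 i, w i ≠ 1) :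
    meanShift X (1 - w) = -((1 - 𝔼 i, w i)⁻¹ • fun u => sampleCov (X u) w) := by
  have h_compl : 𝔼 i, (1 - w) i ≠ 0 := by
    simpa only [expect_one_sub] using sub_ne_zero.mpr hw.symm
  rw [meanShift_eq_smul_sampleCov X h_compl, expect_one_sub, ← smul_neg]
  simp only [sampleCov_one_sub_right]
  rfl

end SampleCovariance

section Statistics

variable {ι κ K : Type*} [Fintype ι] [Fintype κ] [DecidableEq κ] [Field K] [CharZero K]

/-- The statistic `A_n = n T̃ Σ̃⁻¹ T̃ᵀ`, where `T̃` is the negative of the sample covariance of the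
columns of `X` with `R`. -/
noncomputable def novelStatistic (X : κ → ι → K) (R : ι → K) : K :=
  Fintype.card ι * mahalanobisSq (((𝔼 i, R i) * (1 - 𝔼 i, R i)) • sampleCovMatrix X)
    (-fun u => sampleCov (X u) R)

/-- Little's statistic `d²` for univariate nonresponse with response weights `R`. -/
noncomputable def littleStatistic (X : κ → ι → K) (R : ι → K) : K :=
  Fintype.card ι * (𝔼 i, R i) * mahalanobisSq (sampleCovMatrix X) (meanShift X R) +
    Fintype.card ι * (1 - 𝔼 i, R i) * mahalanobisSq (sampleCovMatrix X) (meanShift X (1 - R))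

theorem An_eq_Little_d2_general (X : κ → ι → K) (R : ι → K) (hR₀ : 𝔼 i, R i ≠ 0)
    (hR₁ : 𝔼 i, R i ≠ 1) (hS : IsUnit (sampleCovMatrix X)) :
    novelStatistic X R = littleStatistic X R := by
  have : Nonempty ι := by
    obtain ⟨i, -⟩ := exists_ne_zero_of_expect_ne_zero hR₀
    exact ⟨i⟩
  have hR₁' : 1 - 𝔼 i, R i ≠ 0 := sub_ne_zero.mpr hR₁.symm
  rw [novelStatistic, littleStatistic, mahalanobisSq_smul_left hS (mul_ne_zero hR₀ hR₁'),
    meanShift_eq_smul_sampleCov X hR₀, meanShift_one_sub X hR₁]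
  simp only [mahalanobisSq_neg, mahalanobisSq_smul_right]
  field_simp
  ring

end Statistics

/-- **Theorem 5.** For `(p+1)`-variate data with univariate nonresponse —
complete columns `X⁽¹⁾,…,X⁽ᵖ⁾` and binary response indicators `R_i ∈ {0,1}` with
`0 < R̄_n < 1` and invertible maximum-likelihood sample covariance matrix `S̃` of the
`X`-columns — the novel statistic equals Little's statistic: `A_n = d²`. -/
theorem An_eq_Little_d2
    (n p : ℕ)
    (X : Fin p → Fin n → ℝ) (R : Fin n → ℝ)
    (hR01 : ∀ i, R i = 0 ∨ R i = 1)
    (Xbar : Fin p → ℝ) (hXbar : ∀ u, Xbar u = (n : ℝ)⁻¹ * ∑ i, X u i)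
    (Rbar : ℝ) (hRbar : Rbar = (n : ℝ)⁻¹ * ∑ i, R i)
    (hRbar0 : 0 < Rbar) (hRbar1 : Rbar < 1)
    (S : Matrix (Fin p) (Fin p) ℝ)
    (hS : S = Matrix.of fun u v => (n : ℝ)⁻¹ * ∑ i, X u i * X v i - Xbar u * Xbar v)
    (hSinv : IsUnit S)
    (T : Fin p → ℝ)
    (hT : ∀ u, T u = Xbar u * Rbar - (n : ℝ)⁻¹ * ∑ i, X u i * R i)
    (Sig : Matrix (Fin p) (Fin p) ℝ)
    (hSig : Sig = (Rbar * (1 - Rbar)) • S)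
    (A : ℝ)
    (hA : A = (n : ℝ) * ∑ u : Fin p, ∑ v : Fin p, T u * Sig⁻¹ u v * T v)
    (L L₁ : Fin p → ℝ)
    (hL : ∀ u, L u = (∑ i, X u i * R i) / (∑ i, R i) - Xbar u)
    (hL₁ : ∀ u, L₁ u = (∑ i, X u i * (1 - R i)) / (∑ i, (1 - R i)) - Xbar u)
    (d2 : ℝ)
    (hd2 : d2 = (n : ℝ) * Rbar * (∑ u : Fin p, ∑ v : Fin p, L u * S⁻¹ u v * L v)
      + (n : ℝ) * (1 - Rbar) * (∑ u : Fin p, ∑ v : Fin p, L₁ u * S⁻¹ u v * L₁ v)) :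
    A = d2 := by
  simp only [inv_mul_sum_fin_eq_expect] at hXbar hRbar hS hT
  obtain rfl : Xbar = fun u => 𝔼 i, X u i := funext hXbar
  subst hRbar hSig hA hd2
  obtain rfl : S = sampleCovMatrix X := hS
  obtain rfl : T = -fun u => sampleCov (X u) R := funext fun u => (hT u).trans (neg_sub _ _).symm
  obtain rfl : L = meanShift X R := funext fun u => (hL u).trans (meanShift_apply X R u).symm
  obtain rfl : L₁ = meanShift X (1 - R) :=
    funext fun u => (hL₁ u).trans (meanShift_apply X (1 - R) u).symm
  simpa only [novelStatistic, littleStatistic, mahalanobisSq_eq_sum, Fintype.card_fin] using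
    An_eq_Little_d2_general X R hRbar0.ne' hRbar1.ne hSinv
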